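/- arXiv:2605.25289 — 3 statements merged into one kernel-verified Lean document; each statement's English description precedes it below -/
import Mathlib

section
/- Let G be a finite simple graph and let H be a path-intersecting subgraph of G. Then the chromatic polynomial χ(H,t) divides the chromatic polynomial χ(G,t) in the polynomial ring ℚ[t]. -/
/-- A subgraph `H` of a simple graph `G` is *path-intersecting* if for every pair of
vertices `u v ∈ V_H` that are distinct and non-adjacent in `H`, there is no path `P`
in `G` from `u` to `v` whose edge set is disjoint from the edge set of `H` and whose
vertex set meets the vertex set of `H` exactly in `{u, v}`. -/
def SimpleGraph.Subgraph.PathIntersecting {V : Type*} {G : SimpleGraph V}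
    (H : G.Subgraph) : Prop :=
  ∀ ⦃u v : V⦄, u ∈ H.verts → v ∈ H.verts → u ≠ v → ¬ H.Adj u v →
    ∀ p : G.Walk u v, p.IsPath → (∀ e ∈ p.edges, e ∉ H.edgeSet) →
      ¬ (∀ w ∈ p.support, w ∈ H.verts → w = u ∨ w = v)

open Polynomial Filter Topology in
theorem poly_dvd_of_eval_dvd (P Q : Polynomial ℚ)
    (h : ∀ k : ℕ, ∃ n : ℤ, P.eval (k : ℚ) = Q.eval (k : ℚ) * n) : Q ∣ P := by
  by_cases hQ : Q = 0
  · subst hQ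
    have : P = 0 := by
      apply Polynomial.eq_zero_of_infinite_isRoot
      apply Set.Infinite.mono (s := Set.range (fun k : ℕ => (k : ℚ)))
      · rintro _ ⟨k, rfl⟩
        obtain ⟨n, hn⟩ := h k
        simpa [Polynomial.IsRoot] using hn
      · exact Set.infinite_range_of_injective Nat.cast_injective
    rw [this]
  · obtain ⟨d, hd, hd'⟩ := (show ∃ d : ℤ, d ≠ 0 ∧ ∀ k : ℕ, ∃ m : ℤ, d * (P / Q).eval (k : ℚ) = m from by
        obtain ⟨b, hb0, hb⟩ := IsLocalization.integerNormalization_spec (nonZeroDivisors ℤ) (P / Q)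
        refine ⟨b, nonZeroDivisors.ne_zero hb0, fun k => ?_⟩
        refine ⟨(IsLocalization.integerNormalization (nonZeroDivisors ℤ) (P / Q)).eval (k : ℤ), ?_⟩
        have := congrArg (Polynomial.eval (k : ℚ)) hb
        have h2 := Polynomial.eval_intCast_map (algebraMap ℤ ℚ)
          (IsLocalization.integerNormalization (nonZeroDivisors ℤ) (P / Q)) (k : ℤ)
        simp at this h2
        rw [← this])
    have hdiv := EuclideanDomain.div_add_mod P Q
    rw [← EuclideanDomain.mod_eq_zero]
    have hdeg : (P % Q).degree < Q.degree := EuclideanDomain.mod_lt P hQ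
    have ht := (Polynomial.div_tendsto_atTop_zero_of_degree_lt (P % Q) Q hdeg).comp
      (tendsto_natCast_atTop_atTop (R := ℚ))
    have ht2 := ht.const_mul (d : ℚ)
    rw [mul_zero] at ht2
    have hev : ∀ᶠ k : ℕ in atTop, Q.eval (k : ℚ) ≠ 0 := by
      have := (Polynomial.eventually_atTop_not_isRoot Q hQ)
      exact (tendsto_natCast_atTop_atTop (R := ℚ)).eventually this
    have hsmall := ht2.eventually (Metric.ball_mem_nhds (0 : ℚ) one_pos)
    have hz : ∀ᶠ k : ℕ in atTop, (P % Q).eval (k : ℚ) = 0 := by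
      filter_upwards [hev, hsmall] with k hk hs
      obtain ⟨n, hn⟩ := h k
      obtain ⟨m, hm⟩ := hd' k
      have e1 := congrArg (Polynomial.eval (k : ℚ)) hdiv
      simp only [Polynomial.eval_add, Polynomial.eval_mul] at e1
      have e2 : (d : ℚ) * ((P % Q).eval (k : ℚ) / Q.eval (k : ℚ)) = ((d * n - m : ℤ) : ℚ) := by
        push_cast
        rw [← hm]
        have : (P % Q).eval (k : ℚ) = Q.eval (k : ℚ) * (n - (P / Q).eval (k : ℚ)) := by
          linear_combination e1 + hn
        rw [this]
        field_simp
      have hs' : |(d : ℚ) * ((P % Q).eval (k : ℚ) / Q.eval (k : ℚ))| < 1 := by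
        have : dist ((d : ℚ) * ((P % Q).eval (k : ℚ) / Q.eval (k : ℚ))) 0 < 1 := hs
        rw [Rat.dist_eq] at this
        simp only [Rat.cast_zero, sub_zero] at this
        exact_mod_cast this
      rw [e2] at hs'
      have h0 : d * n - m = 0 := Int.abs_lt_one_iff.mp (by exact_mod_cast hs')
      rw [h0] at e2
      have hdq : (d : ℚ) ≠ 0 := by exact_mod_cast hd
      simpa [hdq, hk] using e2
    by_contra hne
    have h3 := (tendsto_natCast_atTop_atTop (R := ℚ)).eventually
      (Polynomial.eventually_atTop_not_isRoot (P % Q) hne)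
    obtain ⟨k, hk1, hk2⟩ := (hz.and h3).exists
    exact hk2 hk1

theorem exists_perm_of_injOn {V : Type*} {k : ℕ} (A : Set V) (c c' : V → Fin k)
    (hc : Set.InjOn c A) (hc' : Set.InjOn c' A) :
    ∃ σ : Equiv.Perm (Fin k), ∀ a ∈ A, σ (c a) = c' a := by
  classical
  let e : {x // x ∈ Set.image c A} ≃ {x // x ∈ Set.image c' A} :=
    (Equiv.Set.imageOfInjOn c A hc).symm.trans (Equiv.Set.imageOfInjOn c' A hc')
  refine ⟨e.extendSubtype, fun a ha => ?_⟩
  rw [Equiv.extendSubtype_apply_of_mem e (c a) ⟨a, ha, rfl⟩]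
  have : (⟨c a, ⟨a, ha, rfl⟩⟩ : {x // x ∈ Set.image c A}) = Equiv.Set.imageOfInjOn c A hc ⟨a, ha⟩ := rfl
  rw [this]
  simp only [e, Equiv.trans_apply, Equiv.symm_apply_apply]
  rfl

theorem pathIntersecting_adj_of_walk {V : Type*} {G : SimpleGraph V} {H : G.Subgraph}
    (hH : H.PathIntersecting) {u v : V} (hu : u ∈ H.verts) (hv : v ∈ H.verts) (huv : u ≠ v)
    (p : G.Walk u v) (hp : ∀ w ∈ p.support, w ∈ H.verts → w = u ∨ w = v) : H.Adj u v := by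
  classical
  by_contra hadj
  have hp' : ∀ w ∈ p.bypass.support, w ∈ H.verts → w = u ∨ w = v :=
    fun w hw => hp w (p.support_bypass_subset_support hw)
  refine hH hu hv huv hadj p.bypass p.bypass_isPath ?_ hp'
  intro e
  induction e using Sym2.ind with
  | _ x y =>
    intro he heH
    rw [SimpleGraph.Subgraph.mem_edgeSet] at heH
    have hx := hp' x (p.bypass.fst_mem_support_of_mem_edges he) heH.fst_mem
    have hy := hp' y (p.bypass.snd_mem_support_of_mem_edges he) heH.snd_mem
    have hne := heH.ne
    rcases hx with rfl | rfl <;> rcases hy with rfl | rfl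
    · exact hne rfl
    · exact hadj heH
    · exact hadj heH.symm
    · exact hne rfl

/-- The set of attachment vertices in `H` of a component of the complement of `H`. -/
def attachSet {V : Type*} {G : SimpleGraph V} (H : G.Subgraph)
    (C : (G.induce (H.verts)ᶜ).ConnectedComponent) : Set V :=
  {u | u ∈ H.verts ∧ ∃ x : ((H.verts)ᶜ : Set V),
    (G.induce (H.verts)ᶜ).connectedComponentMk x = C ∧ G.Adj u x}

theorem attachSet_adj {V : Type*} {G : SimpleGraph V} {H : G.Subgraph}
    (hH : H.PathIntersecting) (C : (G.induce (H.verts)ᶜ).ConnectedComponent) {u v : V}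
    (hu : u ∈ attachSet H C) (hv : v ∈ attachSet H C) (huv : u ≠ v) : H.Adj u v := by
  obtain ⟨hu, x, hx, hux⟩ := hu
  obtain ⟨hv, y, hy, hvy⟩ := hv
  obtain ⟨q⟩ := SimpleGraph.ConnectedComponent.exact (hx.trans hy.symm)
  let q' : G.Walk x y := q.map (SimpleGraph.Embedding.induce (H.verts)ᶜ).toHom
  refine pathIntersecting_adj_of_walk hH hu hv huv
    (SimpleGraph.Walk.cons hux (q'.concat hvy.symm)) ?_
  intro w hw hwH
  simp only [SimpleGraph.Walk.support_cons, SimpleGraph.Walk.support_concat, List.mem_cons,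
    List.mem_append, List.not_mem_nil, or_false] at hw
  rcases hw with h | h | h
  · exact Or.inl h
  · have h : w ∈ (q.map (SimpleGraph.Embedding.induce (H.verts)ᶜ).toHom).support := h
    rw [SimpleGraph.Walk.support_map, List.mem_map] at h
    obtain ⟨z, -, rfl⟩ := h
    exact absurd hwH z.2
  · exact Or.inr h

theorem fiber_card_le {V : Type*} [Fintype V] {G : SimpleGraph V} {H : G.Subgraph}
    (hH : H.PathIntersecting) {k : ℕ} (c c' : H.coe.Coloring (Fin k)) :
    Nat.card {f : G.Coloring (Fin k) // f.comp H.hom = c} ≤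
      Nat.card {f : G.Coloring (Fin k) // f.comp H.hom = c'} := by
  classical
  have hfin : Finite (G.Coloring (Fin k)) := DFunLike.finite _
  by_cases hemp : Nonempty {f : G.Coloring (Fin k) // f.comp H.hom = c}
  swap
  · rw [not_nonempty_iff] at hemp
    simp
  have z : V → Fin k := hemp.some.1
  let b : V → Fin k := fun v => if h : v ∈ H.verts then c ⟨v, h⟩ else z v
  let b' : V → Fin k := fun v => if h : v ∈ H.verts then c' ⟨v, h⟩ else z v
  have hb : ∀ v (h : v ∈ H.verts), b v = c ⟨v, h⟩ := fun v h => by simp [b, h]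
  have hb' : ∀ v (h : v ∈ H.verts), b' v = c' ⟨v, h⟩ := fun v h => by simp [b', h]
  have hσ : ∀ C : (G.induce (H.verts)ᶜ).ConnectedComponent, ∃ σ : Equiv.Perm (Fin k),
      ∀ a ∈ attachSet H C, σ (b a) = b' a := by
    intro C
    apply exists_perm_of_injOn
    · intro u hu v hv huv
      by_contra hne
      rw [hb u hu.1, hb v hv.1] at huv
      exact c.valid (v := ⟨u, hu.1⟩) (w := ⟨v, hv.1⟩) (attachSet_adj hH C hu hv hne) huv
    · intro u hu v hv huv
      by_contra hne
      rw [hb' u hu.1, hb' v hv.1] at huv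
      exact c'.valid (v := ⟨u, hu.1⟩) (w := ⟨v, hv.1⟩) (attachSet_adj hH C hu hv hne) huv
  choose σ hσ using hσ
  let T : (V → Fin k) → V → Fin k := fun f v =>
    if h : v ∈ H.verts then b' v
    else σ ((G.induce (H.verts)ᶜ).connectedComponentMk ⟨v, h⟩) (f v)
  have hTin : ∀ f v, v ∈ H.verts → T f v = b' v := fun f v h => by simp [T, h]
  have hTout : ∀ f v (h : v ∉ H.verts), T f v =
      σ ((G.induce (H.verts)ᶜ).connectedComponentMk ⟨v, h⟩) (f v) := fun f v h => by simp [T, h]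
  have hfb : ∀ f : {f : G.Coloring (Fin k) // f.comp H.hom = c}, ∀ v ∈ H.verts, f.1 v = b v := by
    intro f v hv
    rw [hb v hv]
    exact congrArg (fun g : H.coe.Coloring (Fin k) => g ⟨v, hv⟩) f.2
  have hmix : ∀ f : {f : G.Coloring (Fin k) // f.comp H.hom = c}, ∀ u v, u ∈ H.verts →
      v ∉ H.verts → G.Adj u v → T f.1 u ≠ T f.1 v := by
    intro f u v hu hv huv
    rw [hTin _ u hu, hTout _ v hv, ← hσ _ u ⟨hu, ⟨v, hv⟩, rfl, huv⟩, ← hfb f u hu]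
    intro h
    exact f.1.valid huv ((σ _).injective h)
  have hT : ∀ f : {f : G.Coloring (Fin k) // f.comp H.hom = c}, ∀ u v, G.Adj u v →
      T f.1 u ≠ T f.1 v := by
    intro f u v huv
    by_cases hu : u ∈ H.verts <;> by_cases hv : v ∈ H.verts
    · rw [hTin _ u hu, hTin _ v hv, hb' u hu, hb' v hv]
      refine c'.valid (v := ⟨u, hu⟩) (w := ⟨v, hv⟩) ?_
      refine pathIntersecting_adj_of_walk hH hu hv huv.ne (SimpleGraph.Walk.cons huv .nil) ?_
      intro w hw _
      simpa using hw
    · exact hmix f u v hu hv huv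
    · exact (hmix f v u hv hu huv.symm).symm
    · rw [hTout _ u hu, hTout _ v hv]
      have hadj : (G.induce (H.verts)ᶜ).Adj ⟨u, hu⟩ ⟨v, hv⟩ := huv
      rw [SimpleGraph.ConnectedComponent.sound hadj.reachable]
      intro h
      exact f.1.valid huv ((σ _).injective h)
  let F : {f : G.Coloring (Fin k) // f.comp H.hom = c} →
      {f : G.Coloring (Fin k) // f.comp H.hom = c'} := fun f =>
    ⟨SimpleGraph.Coloring.mk (T f.1) (fun {u v} h => hT f u v h), by
      ext v
      have : T f.1 v = c' v := by rw [hTin _ _ v.2, hb' _ v.2]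
      exact congrArg Fin.val this⟩
  refine Nat.card_le_card_of_injective F ?_
  intro f g hfg
  have hfg' : ∀ v, T f.1 v = T g.1 v := fun v =>
    congrArg (fun x : {f : G.Coloring (Fin k) // f.comp H.hom = c'} => x.1 v) hfg
  apply Subtype.ext
  apply DFunLike.ext
  intro v
  by_cases hv : v ∈ H.verts
  · rw [hfb f v hv, hfb g v hv]
  · have := hfg' v
    rw [hTout _ v hv, hTout _ v hv] at this
    exact (σ _).injective this

/-- **Divisibility of chromatic polynomials.**
Let `G` be a finite simple graph and `H` a path-intersecting subgraph of `G`.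
Then the chromatic polynomial `χ(H,t)` divides the chromatic polynomial `χ(G,t)`
in `ℚ[t]`. -/
theorem chromatic_polynomial_dvd_of_pathIntersecting {V : Type*} [Fintype V]
    (G : SimpleGraph V) (H : G.Subgraph) (hH : H.PathIntersecting)
    (PG PH : Polynomial ℚ)
    (hPG : ∀ k : ℕ, PG.eval (k : ℚ) = Nat.card (G.Coloring (Fin k)))
    (hPH : ∀ k : ℕ, PH.eval (k : ℚ) = Nat.card (H.coe.Coloring (Fin k))) :
    PH ∣ PG := by
  classical
  apply poly_dvd_of_eval_dvd
  intro k
  rw [hPG, hPH]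
  have hfin : Finite (G.Coloring (Fin k)) := DFunLike.finite _
  have hfinH : Finite (H.coe.Coloring (Fin k)) := DFunLike.finite _
  have := Fintype.ofFinite (H.coe.Coloring (Fin k))
  have hcard := Nat.card_congr (Equiv.sigmaFiberEquiv
    (fun f : G.Coloring (Fin k) => (f.comp H.hom : H.coe.Coloring (Fin k))))
  rw [Nat.card_sigma] at hcard
  by_cases hne : Nonempty (H.coe.Coloring (Fin k))
  · obtain ⟨c⟩ := hne
    refine ⟨(Nat.card {f : G.Coloring (Fin k) // f.comp H.hom = c} : ℕ), ?_⟩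
    rw [← hcard, Finset.sum_congr rfl
      (fun c' _ => le_antisymm (fiber_card_le hH c' c) (fiber_card_le hH c c'))]
    simp
  · rw [not_nonempty_iff] at hne
    refine ⟨0, ?_⟩
    rw [← hcard]
    simp
end

section
/- Let G_1 = (V_1, E_1) and G_2 = (V_2, E_2) be finite simple graphs, let H_1 be a path-intersecting subgraph of G_1 and H_2 a path-intersecting subgraph of G_2, and suppose φ : H_2 → H_1 is a graph isomorphism. Let G = G_1 ⊕_{H_1} G_2 be the subgraph sum: the simple graph obtained from the disjoint union of G_1 and G_2 by identifying each vertex w of H_2 with the vertex φ(w) of H_1. Then the chromatic polynomials satisfy χ(G,t)·χ(H_1,t) = χ(G_1,t)·χ(G_2,t). -/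
/-- The extensions of a coloring of `H` to a coloring of `G`. -/
abbrev ExtColoring {V : Type*} {G : SimpleGraph V} (H : G.Subgraph) {k : ℕ}
    (c : H.coe.Coloring (Fin k)) : Type _ :=
  {f : G.Coloring (Fin k) // ∀ v : H.verts, f v = c v}

theorem exists_perm_matching {A : Type*} {k : ℕ} (f g : A → Fin k)
    (hf : Function.Injective f) (hg : Function.Injective g) :
    ∃ σ : Equiv.Perm (Fin k), ∀ a, σ (f a) = g a := by
  classical
  let e : {x // x ∈ Set.range f} ≃ {x // x ∈ Set.range g} :=
    (Equiv.ofInjective f hf).symm.trans (Equiv.ofInjective g hg)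
  refine ⟨e.extendSubtype, fun a => ?_⟩
  rw [Equiv.extendSubtype_apply_of_mem e (f a) ⟨a, rfl⟩]
  have : (⟨f a, ⟨a, rfl⟩⟩ : {x // x ∈ Set.range f}) = Equiv.ofInjective f hf a := rfl
  rw [this]
  simp [e]

theorem adj_of_pathIntersecting {V : Type*} {G : SimpleGraph V} {H : G.Subgraph}
    (hH : H.PathIntersecting) {a b : V} (ha : a ∈ H.verts) (hb : b ∈ H.verts) (hab : a ≠ b)
    (p : G.Walk a b) (hp : ∀ w ∈ p.support, w ∈ H.verts → w = a ∨ w = b) : H.Adj a b := by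
  classical
  by_contra hn
  refine hH ha hb hab hn p.bypass p.bypass_isPath ?_ ?_
  · intro e he heH
    induction e using Sym2.ind with
    | _ x y =>
      have hadj : H.Adj x y := heH
      have hx := hp x (p.support_bypass_subset_support (p.bypass.fst_mem_support_of_mem_edges he))
        (H.edge_vert hadj)
      have hy := hp y (p.support_bypass_subset_support (p.bypass.snd_mem_support_of_mem_edges he))
        (H.edge_vert hadj.symm)
      have hne := hadj.ne
      rcases hx with rfl | rfl <;> rcases hy with rfl | rfl
      · exact hne rfl
      · exact hn hadj
      · exact hn hadj.symm
      · exact hne rfl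
  · intro w hw
    exact hp w (p.support_bypass_subset_support hw)

theorem adj_of_attached {V : Type*} {G : SimpleGraph V} {H : G.Subgraph}
    (hH : H.PathIntersecting) {a b : V} (ha : a ∈ H.verts) (hb : b ∈ H.verts) (hab : a ≠ b)
    (w w' : {v : V // v ∈ H.vertsᶜ}) (hr : (G.induce H.vertsᶜ).Reachable w w')
    (haw : G.Adj a w) (hbw : G.Adj w' b) : H.Adj a b := by
  obtain ⟨q⟩ := hr
  let q' : G.Walk w w' := q.map (SimpleGraph.Embedding.induce H.vertsᶜ).toHom
  refine adj_of_pathIntersecting hH ha hb hab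
    (SimpleGraph.Walk.cons haw (q'.append (SimpleGraph.Walk.cons hbw SimpleGraph.Walk.nil))) ?_
  intro x hx hxH
  simp only [SimpleGraph.Walk.support_cons, List.mem_cons, SimpleGraph.Walk.mem_support_append_iff,
    SimpleGraph.Walk.support_nil, List.not_mem_nil, or_false] at hx
  rcases hx with rfl | hx | rfl | rfl
  · exact Or.inl rfl
  · have hx' : x ∈ q.support.map (SimpleGraph.Embedding.induce (G := G) H.vertsᶜ).toHom := by
      rw [← SimpleGraph.Walk.support_map]
      exact hx
    obtain ⟨y, -, rfl⟩ := List.mem_map.1 hx'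
    exact absurd hxH y.2
  · exact absurd hxH w'.2
  · exact Or.inr rfl

theorem card_ext_le {V : Type*} [Fintype V] {G : SimpleGraph V} {H : G.Subgraph}
    (hH : H.PathIntersecting) {k : ℕ} (c c' : H.coe.Coloring (Fin k)) :
    Nat.card (ExtColoring H c) ≤ Nat.card (ExtColoring H c') := by
  classical
  have hσ : ∀ D : (G.induce H.vertsᶜ).ConnectedComponent, ∃ σ : Equiv.Perm (Fin k),
      ∀ a : H.verts, (∃ w : {v : V // v ∈ H.vertsᶜ},
        (G.induce H.vertsᶜ).connectedComponentMk w = D ∧ G.Adj a w) → σ (c a) = c' a := by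
    intro D
    let A := {a : H.verts // ∃ w : {v : V // v ∈ H.vertsᶜ},
        (G.induce H.vertsᶜ).connectedComponentMk w = D ∧ G.Adj a w}
    have key : ∀ a b : A, a ≠ b → H.coe.Adj a.1 b.1 := by
      rintro ⟨a, w, hw, haw⟩ ⟨b, w', hw', hbw⟩ hab
      refine adj_of_attached hH a.2 b.2 ?_ w w' ?_ haw hbw.symm
      · intro h
        exact hab (Subtype.ext (Subtype.ext h))
      · exact SimpleGraph.ConnectedComponent.exact (hw.trans hw'.symm)
    obtain ⟨σ, h⟩ := exists_perm_matching (fun a : A => c a.1) (fun a : A => c' a.1)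
      (fun a b h => by
        by_contra hne
        exact c.valid (key a b hne) h)
      (fun a b h => by
        by_contra hne
        exact c'.valid (key a b hne) h)
    exact ⟨σ, fun a ha => h ⟨a, ha⟩⟩
  choose σ hσ using hσ
  let τ : (V → Fin k) → V → Fin k := fun f v =>
    if h : v ∈ H.verts then c' ⟨v, h⟩
    else σ ((G.induce H.vertsᶜ).connectedComponentMk ⟨v, h⟩) (f v)
  have mixed : ∀ f : ExtColoring H c, ∀ u v : V, u ∈ H.verts → v ∉ H.verts → G.Adj u v →
      τ f.1 u ≠ τ f.1 v := by
    intro f u v hu hv huv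
    simp only [τ, hu, hv, dif_pos, dif_neg, not_false_eq_true]
    rw [← hσ _ ⟨u, hu⟩ ⟨⟨v, hv⟩, rfl, huv⟩, ← f.2 ⟨u, hu⟩]
    intro h
    exact f.1.valid huv ((σ _).injective h)
  have proper : ∀ f : ExtColoring H c, ∀ {u v : V}, G.Adj u v → τ f.1 u ≠ τ f.1 v := by
    intro f u v huv
    by_cases hu : u ∈ H.verts <;> by_cases hv : v ∈ H.verts
    · have hadj : H.Adj u v := by
        refine adj_of_pathIntersecting hH hu hv huv.ne huv.toWalk ?_
        intro w hw _
        simpa using hw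
      simp only [τ, hu, hv, dif_pos]
      exact c'.valid (show H.coe.Adj ⟨u, hu⟩ ⟨v, hv⟩ from hadj)
    · exact mixed f u v hu hv huv
    · exact (mixed f v u hv hu huv.symm).symm
    · simp only [τ, hu, hv, dif_neg, not_false_eq_true]
      have hc : (G.induce H.vertsᶜ).connectedComponentMk ⟨u, hu⟩ =
          (G.induce H.vertsᶜ).connectedComponentMk ⟨v, hv⟩ := by
        apply SimpleGraph.ConnectedComponent.sound
        apply SimpleGraph.Adj.reachable
        simpa using huv
      rw [hc]
      intro h
      exact f.1.valid huv ((σ _).injective h)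
  have : Finite (G.Coloring (Fin k)) := DFunLike.finite _
  refine Nat.card_le_card_of_injective
    (fun f : ExtColoring H c => (⟨SimpleGraph.Coloring.mk (τ f.1) (proper f), fun v => by
      change τ f.1 v = c' v
      simp [τ]⟩ : ExtColoring H c')) ?_
  intro f g hfg
  have hτ : ∀ v, τ f.1 v = τ g.1 v := fun v =>
    congrArg (fun x : ExtColoring H c' => x.1 v) hfg
  apply Subtype.ext
  apply DFunLike.ext
  intro v
  by_cases hv : v ∈ H.verts
  · rw [f.2 ⟨v, hv⟩, g.2 ⟨v, hv⟩]
  · have := hτ v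
    simp only [τ, hv, dif_neg, not_false_eq_true] at this
    exact (σ _).injective this

/-- **Chromatic polynomial of a subgraph sum.**
Let `G₁`, `G₂` be finite simple graphs, `H₁` a path-intersecting subgraph of `G₁`,
`H₂` a path-intersecting subgraph of `G₂`, and `φ : H₂ ≃g H₁` a graph isomorphism.
Let `G = G₁ ⊕_{H₁} G₂` be the subgraph sum, obtained from the disjoint union of `G₁`
and `G₂` by identifying each vertex `w` of `H₂` with the vertex `φ(w)` of `H₁`
(its vertex type is `V₁ ⊕ {v : V₂ // v ∉ H₂.verts}`, and `ρ : V₂ → V₁ ⊕ _` is the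
resulting identification map on the vertices of `G₂`).  Then
`χ(G,t)·χ(H₁,t) = χ(G₁,t)·χ(G₂,t)`. -/
theorem subgraph_sum_chromatic_polynomial {V₁ V₂ : Type*} [Fintype V₁] [Fintype V₂]
    (G₁ : SimpleGraph V₁) (G₂ : SimpleGraph V₂)
    (H₁ : G₁.Subgraph) (H₂ : G₂.Subgraph)
    (h₁ : H₁.PathIntersecting) (h₂ : H₂.PathIntersecting)
    (φ : H₂.coe ≃g H₁.coe)
    (ρ : V₂ → V₁ ⊕ {v : V₂ // v ∉ H₂.verts})
    (hρ₁ : ∀ (v : V₂) (h : v ∈ H₂.verts), ρ v = Sum.inl ((φ ⟨v, h⟩ : H₁.verts) : V₁))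
    (hρ₂ : ∀ (v : V₂) (h : v ∉ H₂.verts), ρ v = Sum.inr ⟨v, h⟩)
    (G : SimpleGraph (V₁ ⊕ {v : V₂ // v ∉ H₂.verts}))
    (hG : ∀ a b, G.Adj a b ↔
      (∃ x y : V₁, G₁.Adj x y ∧ a = Sum.inl x ∧ b = Sum.inl y) ∨
      (∃ x y : V₂, G₂.Adj x y ∧ a = ρ x ∧ b = ρ y))
    (P PH P₁ P₂ : Polynomial ℚ)
    (hP : ∀ k : ℕ, P.eval (k : ℚ) = Nat.card (G.Coloring (Fin k)))
    (hPH : ∀ k : ℕ, PH.eval (k : ℚ) = Nat.card (H₁.coe.Coloring (Fin k)))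
    (hP₁ : ∀ k : ℕ, P₁.eval (k : ℚ) = Nat.card (G₁.Coloring (Fin k)))
    (hP₂ : ∀ k : ℕ, P₂.eval (k : ℚ) = Nat.card (G₂.Coloring (Fin k))) :
    P * PH = P₁ * P₂ := by
  classical
  have hcount : ∀ k : ℕ, Nat.card (G.Coloring (Fin k)) * Nat.card (H₁.coe.Coloring (Fin k)) =
      Nat.card (G₁.Coloring (Fin k)) * Nat.card (G₂.Coloring (Fin k)) := by
    intro k
    have : Finite (G₁.Coloring (Fin k)) := DFunLike.finite _
    have : Finite (G₂.Coloring (Fin k)) := DFunLike.finite _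
    have : Finite (H₂.coe.Coloring (Fin k)) := DFunLike.finite _
    have := Fintype.ofFinite (G₁.Coloring (Fin k))
    have := Fintype.ofFinite (H₂.coe.Coloring (Fin k))
    obtain ⟨N, hN⟩ : ∃ N, ∀ c : H₂.coe.Coloring (Fin k), Nat.card (ExtColoring H₂ c) = N := by
      by_cases h : Nonempty (H₂.coe.Coloring (Fin k))
      · obtain ⟨c₀⟩ := h
        exact ⟨_, fun c => le_antisymm (card_ext_le h₂ c c₀) (card_ext_le h₂ c₀ c)⟩
      · exact ⟨0, fun c => absurd ⟨c⟩ h⟩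
    have hH : Nat.card (H₁.coe.Coloring (Fin k)) = Nat.card (H₂.coe.Coloring (Fin k)) :=
      Nat.card_congr
        { toFun := fun c => c.comp φ.toHom
          invFun := fun c => c.comp φ.symm.toHom
          left_inv := fun c => by
            apply DFunLike.ext
            intro v
            simp
          right_inv := fun c => by
            apply DFunLike.ext
            intro v
            simp }
    have hG2 : Nat.card (G₂.Coloring (Fin k)) = Nat.card (H₂.coe.Coloring (Fin k)) * N := by
      have e : G₂.Coloring (Fin k) ≃ Σ c : H₂.coe.Coloring (Fin k), ExtColoring H₂ c :=
        { toFun := fun f => ⟨f.comp H₂.hom, f, fun v => rfl⟩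
          invFun := fun x => x.2.1
          left_inv := fun f => rfl
          right_inv := by
            rintro ⟨c, f, hf⟩
            have : f.comp H₂.hom = c := by
              apply DFunLike.ext
              intro v
              exact hf v
            subst this
            rfl }
      rw [Nat.card_congr e, Nat.card_sigma]
      rw [Finset.sum_congr rfl (fun c _ => hN _)]
      simp
    let r : G₁.Coloring (Fin k) → H₂.coe.Coloring (Fin k) := fun f =>
      (f.comp H₁.hom).comp φ.toHom
    have hr : ∀ f (v : H₂.verts), r f v = f (φ v : H₁.verts) := fun f v => rfl
    have hGc : Nat.card (G.Coloring (Fin k)) = Nat.card (G₁.Coloring (Fin k)) * N := by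
      let i₁ : G₁ →g G := ⟨Sum.inl, fun {a b} h => (hG _ _).2 (Or.inl ⟨a, b, h, rfl, rfl⟩)⟩
      let i₂ : G₂ →g G := ⟨ρ, fun {a b} h => (hG _ _).2 (Or.inr ⟨a, b, h, rfl, rfl⟩)⟩
      let glue : (Σ f : G₁.Coloring (Fin k), ExtColoring H₂ (r f)) →
          V₁ ⊕ {v : V₂ // v ∉ H₂.verts} → Fin k := fun x =>
        Sum.elim (fun v => x.1 v) (fun v => x.2.1 v.1)
      have glue_ρ : ∀ x v, glue x (ρ v) = x.2.1 v := by
        intro x v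
        by_cases hv : v ∈ H₂.verts
        · rw [hρ₁ v hv]
          exact (x.2.2 ⟨v, hv⟩).symm
        · rw [hρ₂ v hv]
          rfl
      have glue_proper : ∀ x, ∀ {a b}, G.Adj a b → glue x a ≠ glue x b := by
        intro x a b hab
        rcases (hG a b).1 hab with ⟨u, v, huv, rfl, rfl⟩ | ⟨u, v, huv, rfl, rfl⟩
        · exact x.1.valid huv
        · rw [glue_ρ, glue_ρ]
          exact x.2.1.valid huv
      have e : G.Coloring (Fin k) ≃ Σ f : G₁.Coloring (Fin k), ExtColoring H₂ (r f) :=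
        { toFun := fun f => ⟨f.comp i₁, f.comp i₂, fun v => by
            change f (ρ v) = f (Sum.inl _)
            rw [hρ₁ v v.2]
            rfl⟩
          invFun := fun x => SimpleGraph.Coloring.mk (glue x) (glue_proper x)
          left_inv := fun f => by
            apply DFunLike.ext
            rintro (v | ⟨v, hv⟩)
            · rfl
            · change f (ρ v) = _
              rw [hρ₂ v hv]
          right_inv := by
            rintro ⟨f, g, hg⟩
            have h2 : (SimpleGraph.Coloring.mk (glue ⟨f, g, hg⟩) (glue_proper ⟨f, g, hg⟩)).comp i₂
                = g := by
              apply DFunLike.ext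
              intro v
              exact glue_ρ ⟨f, g, hg⟩ v
            refine Sigma.ext rfl (heq_of_eq ?_)
            exact Subtype.ext h2 }
      rw [Nat.card_congr e, Nat.card_sigma]
      rw [Finset.sum_congr rfl (fun c _ => hN _)]
      simp
    rw [hGc, hG2, hH]
    ring
  apply Polynomial.eq_of_infinite_eval_eq
  refine (Set.infinite_range_of_injective (Nat.cast_injective (R := ℚ))).mono ?_
  rintro _ ⟨k, rfl⟩
  simp only [Set.mem_ofPred_eq, Polynomial.eval_mul, hP, hPH, hP₁, hP₂]
  exact_mod_cast hcount k
end

section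
/- Let G be a finite simple graph and let H be a path-intersecting subgraph of G. Then H is an induced subgraph of G and H is isometric in G, i.e., for every pair of vertices u, v of H, the distance between u and v in H equals the distance between u and v in G. -/
theorem exists_coe_walk_of_path {V : Type*}
    {G : SimpleGraph V} {H : G.Subgraph} (hH : H.PathIntersecting) (n : ℕ) :
    ∀ (u v : V) (hu : u ∈ H.verts) (hv : v ∈ H.verts) (p : G.Walk u v), p.IsPath →
      p.length = n → ∃ q : H.coe.Walk ⟨u, hu⟩ ⟨v, hv⟩, q.length ≤ n := by
  classical
  induction n using Nat.strong_induction_on with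
  | _ n ih =>
    intro u v hu hv p hp hn
    by_cases huv : u = v
    · subst huv
      exact ⟨SimpleGraph.Walk.nil, by simp⟩
    by_cases hadj : H.Adj u v
    · have h : H.coe.Adj ⟨u, hu⟩ ⟨v, hv⟩ := hadj
      refine ⟨h.toWalk, ?_⟩
      have h0 : p.length ≠ 0 := fun h0 => huv (SimpleGraph.Walk.eq_of_length_eq_zero h0)
      simp
      omega
    by_cases hex : ∀ w ∈ p.support, w ∈ H.verts → w = u ∨ w = v
    · refine absurd hex (hH hu hv huv hadj p hp ?_)
      intro e
      induction e using Sym2.ind with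
      | _ a b =>
        intro he heH
        have hab : H.Adj a b := heH
        have ha := hex a (p.fst_mem_support_of_mem_edges he) hab.fst_mem
        have hb := hex b (p.snd_mem_support_of_mem_edges he) hab.snd_mem
        have hne := hab.ne
        rcases ha with rfl | rfl <;> rcases hb with rfl | rfl
        · exact hne rfl
        · exact hadj hab
        · exact hadj hab.symm
        · exact hne rfl
    · push Not at hex
      obtain ⟨w, hw, hwH, hwu, hwv⟩ := hex
      have hlen : (p.takeUntil w hw).length + (p.dropUntil w hw).length = p.length := by
        rw [← SimpleGraph.Walk.length_append, SimpleGraph.Walk.take_spec]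
      have h1 : (p.takeUntil w hw).length ≠ 0 :=
        fun h0 => hwu (SimpleGraph.Walk.eq_of_length_eq_zero h0).symm
      have h2 : (p.dropUntil w hw).length ≠ 0 :=
        fun h0 => hwv (SimpleGraph.Walk.eq_of_length_eq_zero h0)
      obtain ⟨q1, hq1⟩ := ih _ (by omega) u w hu hwH _ (hp.takeUntil hw) rfl
      obtain ⟨q2, hq2⟩ := ih _ (by omega) w v hwH hv _ (hp.dropUntil hw) rfl
      refine ⟨q1.append q2, ?_⟩
      rw [SimpleGraph.Walk.length_append]
      omega

/-- **Path-intersecting subgraphs are induced and isometric.**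
Let `G` be a finite simple graph and `H` a path-intersecting subgraph of `G`.  Then `H`
is an induced subgraph of `G`, and `H` is isometric in `G`: for every pair of vertices
`u, v` of `H`, the distance between `u` and `v` in `H` equals their distance in `G`. -/
theorem induced_and_isometric_of_pathIntersecting {V : Type*} [Fintype V]
    (G : SimpleGraph V) (H : G.Subgraph) (hH : H.PathIntersecting) :
    H.IsInduced ∧
      ∀ (u v : V) (hu : u ∈ H.verts) (hv : v ∈ H.verts),
        H.coe.dist ⟨u, hu⟩ ⟨v, hv⟩ = G.dist u v := by
  constructor
  · intro u hu v hv h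
    by_contra hn
    refine hH hu hv h.ne hn h.toWalk (by simp [h.ne]) ?_ ?_
    · intro e he
      simp at he
      subst he
      exact hn
    · intro w hw _
      simpa using hw
  · intro u v hu hv
    by_cases hr : G.Reachable u v
    · obtain ⟨p, hp, hl⟩ := hr.exists_path_of_dist
      obtain ⟨q, hq⟩ := exists_coe_walk_of_path hH _ u v hu hv p hp rfl
      apply le_antisymm
      · exact (SimpleGraph.dist_le q).trans (hq.trans hl.le)
      · obtain ⟨r, hr'⟩ := q.reachable.exists_walk_length_eq_dist
        rw [← hr', ← SimpleGraph.Walk.length_map H.hom r]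
        exact SimpleGraph.dist_le (r.map H.hom)
    · rw [SimpleGraph.dist_eq_zero_of_not_reachable hr]
      apply SimpleGraph.dist_eq_zero_of_not_reachable
      intro h
      exact hr (h.map H.hom)
end
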